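/- arXiv:2301.08502 — 2 statements merged into one kernel-verified Lean document; each statement's English description precedes it below -/
import Mathlib

section
/- (One-step total-variation recursion for Markov kernels.) Let X and Y be countable types, let μ₁, μ₂ be probability mass functions on X, and let K₁, K₂ : X → PMF(Y) be two transition kernels. Then the total variation distance between the induced next-step distributions satisfies D_TV(μ₁.bind K₁, μ₂.bind K₂) ≤ D_TV(μ₁, μ₂) + E_{x∼μ₁}[D_TV(K₁(x), K₂(x))], where (μ.bind K)(y) = Σ_x μ(x)·K(x)(y). -/
open scoped ENNReal

noncomputable section

/-- Total variation distance between two probability mass functions on a countable type: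
`D_TV(p, q) = (1/2) * Σ_x |p(x) - q(x)|`. -/
def tv {X : Type*} (p q : PMF X) : ℝ :=
  (1 / 2) * ∑' x : X, |(p x).toReal - (q x).toReal|

/-- The state-action distribution at time `t` under initial distribution `ρ0`, policy `π`
and dynamics `P`:  `ν_0(s,a) = ρ0(s)·π(a|s)` and
`ν_{t+1}(s',a') = Σ_{s,a} ν_t(s,a)·P(s'|s,a)·π(a'|s')`. -/
def nu {S A : Type*} (ρ0 : PMF S) (π : S → PMF A) (P : S × A → PMF S) : ℕ → PMF (S × A)
  | 0 => ρ0.bind fun s => (π s).map fun a => (s, a)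
  | (t + 1) => (nu ρ0 π P t).bind fun sa =>
      (P sa).bind fun s' => (π s').map fun a' => (s', a')

/-- The discounted return `J_P(π) = Σ_{t=0}^∞ γ^t · E_{(s,a)∼ν_t^{π,P}}[R(s,a)]`. -/
def J {S A : Type*} (R : S × A → ℝ) (γ : ℝ) (ρ0 : PMF S) (π : S → PMF A)
    (P : S × A → PMF S) : ℝ :=
  ∑' t : ℕ, γ ^ t * ∑' sa : S × A, ((nu ρ0 π P t) sa).toReal * R sa

/-!
Insert the hybrid law `μ₁.bind K₂` and use the triangle inequality. Replacing `K₁` by `K₂` costs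
at most the `μ₁`-average of the kernel distances, and replacing `μ₁` by `μ₂` under a common kernel
costs at most `tv μ₁ μ₂`. Both bounds are the `ℓ¹` Minkowski inequality
`∑ y, |∑ x, w x * k x y| ≤ ∑ x, |w x| * ∑ y, |k x y|`, with the signed object placed in the kernel
`k = K₁ - K₂` in the first case and in the weight `w = μ₁ - μ₂` in the second.
-/

section Minkowski

variable {X Y 𝕜 E : Type*} [SeminormedAddCommGroup E]

theorem tsum_norm_tsum_le_tsum_tsum_norm {f : X → Y → E}
    (hf : Summable (Function.uncurry fun x y => ‖f x y‖)) :
    ∑' y, ‖∑' x, f x y‖ ≤ ∑' x, ∑' y, ‖f x y‖ := by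
  have hcol : ∀ y, ‖∑' x, f x y‖ ≤ ∑' x, ‖f x y‖ := fun y =>
    norm_tsum_le_tsum_norm (hf.prod_symm.prod_factor y)
  have hcol_summable : Summable fun y => ∑' x, ‖f x y‖ := hf.prod_symm.prod
  calc ∑' y, ‖∑' x, f x y‖
      ≤ ∑' y, ∑' x, ‖f x y‖ :=
        (hcol_summable.of_nonneg_of_le (fun _ => norm_nonneg _) hcol).tsum_le_tsum hcol
          hcol_summable
    _ = ∑' x, ∑' y, ‖f x y‖ := hf.tsum_comm

theorem tsum_norm_tsum_smul_le [Norm 𝕜] [SMul 𝕜 E] [NormSMulClass 𝕜 E] {w : X → 𝕜}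
    {k : X → Y → E} (hk : ∀ x, Summable fun y => ‖k x y‖)
    (hwk : Summable fun x => ‖w x‖ * ∑' y, ‖k x y‖) :
    ∑' y, ‖∑' x, w x • k x y‖ ≤ ∑' x, ‖w x‖ * ∑' y, ‖k x y‖ := by
  have hrow : ∀ x, ∑' y, ‖w x • k x y‖ = ‖w x‖ * ∑' y, ‖k x y‖ := fun x => by
    simp only [norm_smul, tsum_mul_left]
  have hsummable : Summable (Function.uncurry fun x y => ‖w x • k x y‖) := by
    refine (summable_prod_of_nonneg fun _ => norm_nonneg _).2 ⟨fun x => ?_, ?_⟩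
    · simpa only [Function.uncurry_apply_pair, norm_smul] using (hk x).mul_left ‖w x‖
    · simpa only [Function.uncurry_apply_pair, hrow] using hwk
  simpa only [hrow] using tsum_norm_tsum_le_tsum_tsum_norm hsummable

end Minkowski

section TotalVariation

variable {X Y : Type*}

theorem hasSum_toReal_pmf (p : PMF X) : HasSum (fun x => (p x).toReal) 1 := by
  have h := ENNReal.hasSum_toReal p.tsum_coe_ne_top
  rwa [← ENNReal.tsum_toReal_eq p.apply_ne_top, p.tsum_coe, ENNReal.toReal_one] at h

theorem hasSum_toReal_bind_apply (μ : PMF X) (K : X → PMF Y) (y : Y) :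
    HasSum (fun x => (μ x).toReal * (K x y).toReal) ((μ.bind K) y).toReal := by
  have hne_top : ∑' x, μ x * K x y ≠ ∞ := μ.bind_apply K y ▸ (μ.bind K).apply_ne_top y
  have h := ENNReal.hasSum_toReal hne_top
  rw [← ENNReal.tsum_toReal_eq (ENNReal.ne_top_of_tsum_ne_top hne_top), ← PMF.bind_apply] at h
  simpa only [ENNReal.toReal_mul] using h

theorem summable_abs_toReal_sub (p q : PMF X) :
    Summable fun x => |(p x).toReal - (q x).toReal| :=
  ((hasSum_toReal_pmf p).summable.sub (hasSum_toReal_pmf q).summable).abs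

theorem tsum_abs_toReal_sub (p q : PMF X) :
    ∑' x, |(p x).toReal - (q x).toReal| = 2 * tv p q := by
  unfold tv
  ring

theorem tv_nonneg (p q : PMF X) : 0 ≤ tv p q :=
  mul_nonneg one_half_pos.le (tsum_nonneg fun _ => abs_nonneg _)

theorem tv_le_one (p q : PMF X) : tv p q ≤ 1 := by
  have hadd := (hasSum_toReal_pmf p).add (hasSum_toReal_pmf q)
  have hle : ∀ x, |(p x).toReal - (q x).toReal| ≤ (p x).toReal + (q x).toReal := fun x => by
    simpa only [ENNReal.abs_toReal] using abs_sub (p x).toReal (q x).toReal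
  have hsum := hasSum_le hle (summable_abs_toReal_sub p q).hasSum hadd
  rw [tsum_abs_toReal_sub] at hsum
  linarith

theorem tv_triangle (p q r : PMF X) : tv p r ≤ tv p q + tv q r := by
  have hpq := summable_abs_toReal_sub p q
  have hqr := summable_abs_toReal_sub q r
  have hsum := (summable_abs_toReal_sub p r).tsum_le_tsum
    (fun _ => abs_sub_le _ _ _) (hpq.add hqr)
  rw [hpq.tsum_add hqr] at hsum
  simp only [tsum_abs_toReal_sub] at hsum
  linarith

theorem summable_toReal_mul_tv (μ : PMF X) (K₁ K₂ : X → PMF Y) :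
    Summable fun x => (μ x).toReal * tv (K₁ x) (K₂ x) :=
  (hasSum_toReal_pmf μ).summable.of_nonneg_of_le
    (fun _ => mul_nonneg ENNReal.toReal_nonneg (tv_nonneg _ _))
    (fun _ => mul_le_of_le_one_right ENNReal.toReal_nonneg (tv_le_one _ _))

theorem tv_bind_same_kernel_le (μ₁ μ₂ : PMF X) (K : X → PMF Y) :
    tv (μ₁.bind K) (μ₂.bind K) ≤ tv μ₁ μ₂ := by
  have hmass : ∀ x, ∑' y, |(K x y).toReal| = 1 := fun x => by
    simpa only [ENNReal.abs_toReal] using (hasSum_toReal_pmf (K x)).tsum_eq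
  have hbind : ∀ y, ((μ₁.bind K) y).toReal - ((μ₂.bind K) y).toReal =
      ∑' x, ((μ₁ x).toReal - (μ₂ x).toReal) • (K x y).toReal := fun y => by
    simpa only [smul_eq_mul, sub_mul] using
      ((hasSum_toReal_bind_apply μ₁ K y).sub (hasSum_toReal_bind_apply μ₂ K y)).tsum_eq.symm
  have hle := tsum_norm_tsum_smul_le (w := fun x => (μ₁ x).toReal - (μ₂ x).toReal)
    (k := fun x y => (K x y).toReal) (fun x => (hasSum_toReal_pmf (K x)).summable.norm)
    (by simpa only [Real.norm_eq_abs, hmass, mul_one] using summable_abs_toReal_sub μ₁ μ₂)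
  simp only [← hbind, Real.norm_eq_abs, hmass, mul_one, tsum_abs_toReal_sub] at hle
  linarith

theorem tv_bind_same_law_le (μ : PMF X) (K₁ K₂ : X → PMF Y) :
    tv (μ.bind K₁) (μ.bind K₂) ≤ ∑' x, (μ x).toReal * tv (K₁ x) (K₂ x) := by
  have hbind : ∀ y, ((μ.bind K₁) y).toReal - ((μ.bind K₂) y).toReal =
      ∑' x, (μ x).toReal • ((K₁ x y).toReal - (K₂ x y).toReal) := fun y => by
    simpa only [smul_eq_mul, mul_sub] using
      ((hasSum_toReal_bind_apply μ K₁ y).sub (hasSum_toReal_bind_apply μ K₂ y)).tsum_eq.symm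
  have hle := tsum_norm_tsum_smul_le (w := fun x => (μ x).toReal)
    (k := fun x y => (K₁ x y).toReal - (K₂ x y).toReal)
    (fun x => summable_abs_toReal_sub (K₁ x) (K₂ x))
    (by simpa only [Real.norm_eq_abs, ENNReal.abs_toReal, tsum_abs_toReal_sub,
      mul_left_comm _ (2 : ℝ)] using (summable_toReal_mul_tv μ K₁ K₂).mul_left 2)
  simp only [← hbind, Real.norm_eq_abs, ENNReal.abs_toReal, tsum_abs_toReal_sub,
    mul_left_comm _ (2 : ℝ), tsum_mul_left] at hle
  linarith

theorem tv_bind_le_general (μ₁ μ₂ : PMF X) (K₁ K₂ : X → PMF Y) :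
    tv (μ₁.bind K₁) (μ₂.bind K₂) ≤
      tv μ₁ μ₂ + ∑' x, (μ₁ x).toReal * tv (K₁ x) (K₂ x) :=
  calc tv (μ₁.bind K₁) (μ₂.bind K₂)
      ≤ tv (μ₁.bind K₁) (μ₁.bind K₂) + tv (μ₁.bind K₂) (μ₂.bind K₂) := tv_triangle _ _ _
    _ ≤ ∑' x, (μ₁ x).toReal * tv (K₁ x) (K₂ x) + tv μ₁ μ₂ :=
        add_le_add (tv_bind_same_law_le μ₁ K₁ K₂) (tv_bind_same_kernel_le μ₁ μ₂ K₂)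
    _ = tv μ₁ μ₂ + ∑' x, (μ₁ x).toReal * tv (K₁ x) (K₂ x) := add_comm _ _

end TotalVariation

/-- **One-step total-variation recursion for Markov kernels.**
`D_TV(μ₁K₁, μ₂K₂) ≤ D_TV(μ₁, μ₂) + E_{x∼μ₁}[D_TV(K₁(x), K₂(x))]`. -/
theorem tv_bind_le {X Y : Type*} [Countable X] [Countable Y]
    (μ₁ μ₂ : PMF X) (K₁ K₂ : X → PMF Y) :
    tv (μ₁.bind K₁) (μ₂.bind K₂) ≤
      tv μ₁ μ₂ + ∑' x : X, (μ₁ x).toReal * tv (K₁ x) (K₂ x) :=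
  tv_bind_le_general μ₁ μ₂ K₁ K₂
end
end

section
/- (State-action distribution distance under policy shift.) Let P be a dynamics, π₁ and π₂ two policies, and ε_π := sup_{s∈S} D_TV(π₁(·|s), π₂(·|s)). Then for every t ≥ 0, the state-action distributions at time t generated by the two policies under the same dynamics P and the same initial distribution satisfy D_TV(ν_t^{π₁,P}, ν_t^{π₂,P}) ≤ (t+1)·ε_π. -/
open scoped ENNReal

noncomputable section

/-!
Both `∑ x, (p x - q x)⁺` and `∑ x, (q x - p x)⁺` equal `∑ x, max (p x) (q x) - 1` for probability
mass functions, so `D_TV(p, q) = ∑ x, (p x - q x)⁺`. Truncated subtraction on `ℝ≥0∞` makes this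
expression convenient: no summability has to be checked, and subadditivity of `(· - ·)⁺` gives both
the contraction of total variation under a common kernel and its convexity when only the kernel
changes. Sampling the successor state is a common kernel, so each time step adds at most
`sup D_TV(π₁(·|s), π₂(·|s))`, through the choice of the action.
-/

/-- Total variation distance as an extended nonnegative real, used to estimate `tv` without
summability conditions. It is encoded as the mass by which `p` exceeds `q`: the subtraction is
truncated at `0`. -/
def etv {X : Type*} (p q : PMF X) : ℝ≥0∞ :=
  ∑' x, (p x - q x)

/-- The joint law `ρ(s)·π(a|s)` of a state drawn from `ρ` and an action chosen by the policy `π`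
at that state; `nu` applies it to the law of the state at each time. -/
def stateActionLaw {S A : Type*} (ρ : PMF S) (π : S → PMF A) : PMF (S × A) :=
  ρ.bind fun s => (π s).map fun a => (s, a)

section TotalVariation

variable {X Y : Type*}

theorem etv_le_one (p q : PMF X) : etv p q ≤ 1 :=
  calc etv p q ≤ ∑' x, p x := ENNReal.tsum_le_tsum fun _ => tsub_le_self
    _ = 1 := p.tsum_coe

theorem etv_ne_top (p q : PMF X) : etv p q ≠ ∞ :=
  ne_top_of_le_ne_top ENNReal.one_ne_top (etv_le_one p q)

theorem etv_triangle (p q r : PMF X) : etv p r ≤ etv p q + etv q r :=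
  calc etv p r ≤ ∑' x, ((p x - q x) + (q x - r x)) :=
        ENNReal.tsum_le_tsum fun _ => tsub_le_tsub_add_tsub
    _ = etv p q + etv q r := ENNReal.tsum_add

theorem etv_add_one_eq_tsum_max (p q : PMF X) : etv p q + 1 = ∑' x, max (p x) (q x) := by
  rw [etv, ← q.tsum_coe, ← ENNReal.tsum_add]
  simp only [tsub_add_eq_max]

theorem etv_comm (p q : PMF X) : etv p q = etv q p := by
  rw [← ENNReal.add_left_inj ENNReal.one_ne_top, etv_add_one_eq_tsum_max,
    etv_add_one_eq_tsum_max]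
  simp only [max_comm]

theorem abs_toReal_sub_toReal {a b : ℝ≥0∞} (ha : a ≠ ∞) (hb : b ≠ ∞) :
    |a.toReal - b.toReal| = ((a - b) + (b - a)).toReal := by
  wlog hab : a ≤ b generalizing a b
  · rw [abs_sub_comm, add_comm, this hb ha (le_of_not_ge hab)]
  · rw [tsub_eq_zero_of_le hab, zero_add, ENNReal.toReal_sub_of_le hab hb, abs_sub_comm,
      abs_of_nonneg (sub_nonneg.2 (ENNReal.toReal_mono hb hab))]

theorem tv_eq_toReal_etv (p q : PMF X) : tv p q = (etv p q).toReal := by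
  have hsum : ∑' x, |(p x).toReal - (q x).toReal| = (etv p q + etv q p).toReal := by
    simp only [abs_toReal_sub_toReal (p.apply_ne_top _) (q.apply_ne_top _), etv,
      ← ENNReal.tsum_add]
    refine (ENNReal.tsum_toReal_eq fun x => ?_).symm
    simp [p.apply_ne_top x, q.apply_ne_top x]
  rw [tv, hsum, etv_comm q p, ENNReal.toReal_add (etv_ne_top p q) (etv_ne_top p q)]
  ring

theorem iSup_etv_ne_top {ι : Sort*} (p q : ι → PMF X) : ⨆ i, etv (p i) (q i) ≠ ∞ :=
  ne_top_of_le_ne_top ENNReal.one_ne_top (iSup_le fun i => etv_le_one (p i) (q i))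

theorem iSup_tv_eq_toReal_iSup_etv {ι : Sort*} (p q : ι → PMF X) :
    ⨆ i, tv (p i) (q i) = (⨆ i, etv (p i) (q i)).toReal := by
  simp only [tv_eq_toReal_etv, ENNReal.toReal_iSup fun i => etv_ne_top (p i) (q i)]

theorem tv_self (p : PMF X) : tv p p = 0 := by simp [tv]

theorem tsum_tsub_tsum_le (u v : X → ℝ≥0∞) :
    ∑' x, u x - ∑' x, v x ≤ ∑' x, (u x - v x) := by
  rw [tsub_le_iff_right, ← ENNReal.tsum_add]
  exact ENNReal.tsum_le_tsum fun _ => le_tsub_add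

theorem etv_bind_le_tsum (p q : PMF X) (f g : X → PMF Y) :
    etv (p.bind f) (q.bind g) ≤ ∑' x, ∑' y, (p x * f x y - q x * g x y) := by
  rw [ENNReal.tsum_comm]
  exact ENNReal.tsum_le_tsum fun y => by
    simpa only [PMF.bind_apply] using tsum_tsub_tsum_le _ _

theorem etv_bind_le_etv (p q : PMF X) (f : X → PMF Y) :
    etv (p.bind f) (q.bind f) ≤ etv p q :=
  calc etv (p.bind f) (q.bind f) ≤ ∑' x, ∑' y, (p x * f x y - q x * f x y) :=
        etv_bind_le_tsum p q f f
    _ = ∑' x, (p x - q x) * ∑' y, f x y := by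
        simp only [← ENNReal.tsum_mul_left,
          ENNReal.sub_mul fun _ _ => (f _).apply_ne_top _]
    _ = etv p q := by simp only [PMF.tsum_coe, mul_one, etv]

theorem etv_bind_le_tsum_mul_etv (p : PMF X) (f g : X → PMF Y) :
    etv (p.bind f) (p.bind g) ≤ ∑' x, p x * etv (f x) (g x) :=
  calc etv (p.bind f) (p.bind g) ≤ ∑' x, ∑' y, (p x * f x y - p x * g x y) :=
        etv_bind_le_tsum p p f g
    _ = ∑' x, p x * etv (f x) (g x) := by
        simp only [etv, ← ENNReal.tsum_mul_left,
          ENNReal.mul_sub fun _ _ => p.apply_ne_top _]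

theorem etv_bind_le_iSup (p : PMF X) (f g : X → PMF Y) :
    etv (p.bind f) (p.bind g) ≤ ⨆ x, etv (f x) (g x) :=
  calc etv (p.bind f) (p.bind g) ≤ ∑' x, p x * etv (f x) (g x) :=
        etv_bind_le_tsum_mul_etv p f g
    _ ≤ ∑' x, p x * ⨆ x, etv (f x) (g x) :=
        ENNReal.tsum_le_tsum fun x => mul_le_mul_right (le_iSup (fun x => etv (f x) (g x)) x) _
    _ = ⨆ x, etv (f x) (g x) := by rw [ENNReal.tsum_mul_right, p.tsum_coe, one_mul]

theorem etv_map_le (p q : PMF X) (f : X → Y) : etv (p.map f) (q.map f) ≤ etv p q :=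
  etv_bind_le_etv p q (PMF.pure ∘ f)

end TotalVariation

section PolicyShift

variable {S A : Type*}

theorem nu_zero (ρ : PMF S) (π : S → PMF A) (P : S × A → PMF S) :
    nu ρ π P 0 = stateActionLaw ρ π := rfl

theorem nu_succ (ρ : PMF S) (π : S → PMF A) (P : S × A → PMF S) (t : ℕ) :
    nu ρ π P (t + 1) = stateActionLaw ((nu ρ π P t).bind P) π := by
  rw [nu, stateActionLaw, PMF.bind_bind]

theorem etv_stateActionLaw_le (ρ₁ ρ₂ : PMF S) (π₁ π₂ : S → PMF A) :
    etv (stateActionLaw ρ₁ π₁) (stateActionLaw ρ₂ π₂) ≤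
      etv ρ₁ ρ₂ + ⨆ s, etv (π₁ s) (π₂ s) :=
  calc etv (stateActionLaw ρ₁ π₁) (stateActionLaw ρ₂ π₂)
      ≤ etv (stateActionLaw ρ₁ π₁) (stateActionLaw ρ₂ π₁) +
          etv (stateActionLaw ρ₂ π₁) (stateActionLaw ρ₂ π₂) := etv_triangle _ _ _
    _ ≤ etv ρ₁ ρ₂ + ⨆ s, etv ((π₁ s).map (Prod.mk s)) ((π₂ s).map (Prod.mk s)) :=
        add_le_add (etv_bind_le_etv _ _ _) (etv_bind_le_iSup _ _ _)
    _ ≤ etv ρ₁ ρ₂ + ⨆ s, etv (π₁ s) (π₂ s) := by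
        gcongr with s
        exact etv_map_le _ _ _

theorem etv_nu_le (ρ₁ ρ₂ : PMF S) (π₁ π₂ : S → PMF A) (P : S × A → PMF S) (t : ℕ) :
    etv (nu ρ₁ π₁ P t) (nu ρ₂ π₂ P t) ≤
      etv ρ₁ ρ₂ + (t + 1) * ⨆ s, etv (π₁ s) (π₂ s) := by
  induction t with
  | zero => simpa [nu_zero] using etv_stateActionLaw_le ρ₁ ρ₂ π₁ π₂
  | succ t ih =>
    set ε := ⨆ s, etv (π₁ s) (π₂ s)
    rw [nu_succ, nu_succ]
    calc etv (stateActionLaw ((nu ρ₁ π₁ P t).bind P) π₁)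
          (stateActionLaw ((nu ρ₂ π₂ P t).bind P) π₂)
        ≤ etv ((nu ρ₁ π₁ P t).bind P) ((nu ρ₂ π₂ P t).bind P) + ε :=
          etv_stateActionLaw_le _ _ _ _
      _ ≤ etv (nu ρ₁ π₁ P t) (nu ρ₂ π₂ P t) + ε := by gcongr; exact etv_bind_le_etv _ _ P
      _ ≤ etv ρ₁ ρ₂ + (t + 1) * ε + ε := by gcongr
      _ = etv ρ₁ ρ₂ + ((t + 1 : ℕ) + 1) * ε := by push_cast; ring

theorem tv_nu_le_policy_shift_general (P : S × A → PMF S) (π₁ π₂ : S → PMF A) (ρ₁ ρ₂ : PMF S)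
    (επ : ℝ) (hεπ : επ = ⨆ s : S, tv (π₁ s) (π₂ s)) (t : ℕ) :
    tv (nu ρ₁ π₁ P t) (nu ρ₂ π₂ P t) ≤ tv ρ₁ ρ₂ + (t + 1 : ℝ) * επ := by
  have hmul : (t + 1) * ⨆ s, etv (π₁ s) (π₂ s) ≠ ∞ :=
    ENNReal.mul_ne_top (by finiteness) (iSup_etv_ne_top π₁ π₂)
  rw [hεπ, iSup_tv_eq_toReal_iSup_etv, tv_eq_toReal_etv, tv_eq_toReal_etv]
  calc (etv (nu ρ₁ π₁ P t) (nu ρ₂ π₂ P t)).toReal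
      ≤ (etv ρ₁ ρ₂ + (t + 1) * ⨆ s, etv (π₁ s) (π₂ s)).toReal :=
        ENNReal.toReal_mono (ENNReal.add_ne_top.2 ⟨etv_ne_top ρ₁ ρ₂, hmul⟩)
          (etv_nu_le ρ₁ ρ₂ π₁ π₂ P t)
    _ = (etv ρ₁ ρ₂).toReal + (t + 1) * (⨆ s, etv (π₁ s) (π₂ s)).toReal := by
        rw [ENNReal.toReal_add (etv_ne_top ρ₁ ρ₂) hmul, ENNReal.toReal_mul,
          ENNReal.toReal_add (ENNReal.natCast_ne_top t) ENNReal.one_ne_top,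
          ENNReal.toReal_natCast, ENNReal.toReal_one]

end PolicyShift

/-- **State-action distribution distance under policy shift.**  For every `t ≥ 0`,
`D_TV(ν_t^{π₁,P}, ν_t^{π₂,P}) ≤ (t+1)·ε_π`. -/
theorem tv_nu_le_policy_shift {S A : Type*} [Countable S] [Countable A]
    (P : S × A → PMF S) (π₁ π₂ : S → PMF A) (ρ0 : PMF S)
    (επ : ℝ) (hεπ : επ = ⨆ s : S, tv (π₁ s) (π₂ s)) :
    ∀ t : ℕ, tv (nu ρ0 π₁ P t) (nu ρ0 π₂ P t) ≤ (t + 1 : ℝ) * επ := by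
  simpa only [tv_self, zero_add] using tv_nu_le_policy_shift_general P π₁ π₂ ρ0 ρ0 επ hεπ
end
end
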